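/- Equip ℝ^{2n} with the standard symplectic form Ω(Z,Z') = Σ_{j=1}^n (u_j v'_j − v_j u'_j) for Z=(u,v), Z'=(u',v'), the standard inner product ⟨·,·⟩, and the standard basis e₁,…,e_n, f₁,…,f_n with Ω(e_i,f_j)=δ_{ij}. Let 0 ≤ l ≤ n and m ≥ 1, and let ν₁,…,ν_m ∈ ℝ^{2n} be orthonormal vectors such that: Ω(ν_j,ν_k) = 0 for all j,k; ⟨ν_j, e_i⟩ = 0 and ⟨ν_j, f_i⟩ = 0 for all j and all i with n−l < i ≤ n; and span{ν₁,…,ν_m} ∩ span{e₁,…,e_n} = {0}. Define the (n−l)×m matrices A and B by A_{ij} = Ω(e_i,ν_j) and B_{ij} = ⟨e_i,ν_j⟩ for 1 ≤ i ≤ n−l. Then the double integral J = ∫_{ℝ^m} ∫_{ℝ^n} exp( −(π/2)·‖Σ_{i=1}^n u_i e_i − Σ_{j=1}^m t_j ν_j‖² − π√−1·Ω(Σ_{i=1}^n u_i e_i, Σ_{j=1}^m t_j ν_j) ) du dt converges absolutely and satisfies J² · det(AᵀA + √−1·BᵀA) = 2^n. -/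

import Mathlib

/-!
Write `ν j = (U j, V j)`, so that `∑ j, t j • ν j = (U t, V t)`. Translating `u` by `U t` turns the
integral over `u` into the Fourier transform of a standard Gaussian, with value
`2 ^ (n / 2) * exp (-π tᵀ(VᵀV + i UᵀV)t)`. The span of `ν` meets the span of the `e i` only in `0`,
so `V` is injective and `VᵀV` is positive definite; isotropy says that `UᵀV` is symmetric. Hence
`VᵀV` and `UᵀV` are simultaneously diagonalizable by a congruence, and the integral over `t` becomes
a product of one-dimensional Gaussian integrals, whose square is `det (VᵀV + i UᵀV)⁻¹`. Finally the
rows of `V` beyond the first `n - l` vanish, so that `VᵀV = AᵀA` and `UᵀV = BᵀA`.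
-/

open scoped Real
open MeasureTheory

/-- Points of `ℝ^{2n}` written as pairs `Z = (u, v)`. -/
abbrev RR2 (n : ℕ) := (Fin n → ℝ) × (Fin n → ℝ)

/-- The standard symplectic form `Ω(Z,Z') = Σ_j (u_j v'_j - v_j u'_j)` on `ℝ^{2n}`. -/
def stdSymp {n : ℕ} (Z Z' : RR2 n) : ℝ := ∑ j, (Z.1 j * Z'.2 j - Z.2 j * Z'.1 j)

/-- The standard inner product on `ℝ^{2n}`. -/
def stdInner {n : ℕ} (Z Z' : RR2 n) : ℝ := ∑ j, Z.1 j * Z'.1 j + ∑ j, Z.2 j * Z'.2 j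

/-- The standard basis vectors `e_i` (the `u`-directions). -/
def eVec {n : ℕ} (i : Fin n) : RR2 n := (Pi.single i 1, 0)

/-- The standard basis vectors `f_i` (the `v`-directions). -/
def fVec {n : ℕ} (i : Fin n) : RR2 n := (0, Pi.single i 1)

/-- The model Bergman kernel integrand
`exp(-(π/2)‖Σᵢ uᵢ eᵢ - Σⱼ tⱼ νⱼ‖² - π √-1 Ω(Σᵢ uᵢ eᵢ, Σⱼ tⱼ νⱼ))`,
as a function of `(t, u) ∈ ℝ^m × ℝ^n`. -/
noncomputable def modelKernel {n m : ℕ} (ν : Fin m → RR2 n)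
    (t : Fin m → ℝ) (u : Fin n → ℝ) : ℂ :=
  Complex.exp
    (-((π : ℂ) / 2) *
        ((stdInner ((∑ i, u i • eVec i) - ∑ j, t j • ν j)
            ((∑ i, u i • eVec i) - ∑ j, t j • ν j) : ℝ) : ℂ)
      - (π : ℂ) * Complex.I *
        ((stdSymp (∑ i, u i • eVec i) (∑ j, t j • ν j) : ℝ) : ℂ))

open Matrix

section Diagonalization

variable {ι : Type*} [Fintype ι]

open scoped ComplexOrder MatrixOrder Matrix.Norms.L2Operator in
theorem exists_congruence_eq_one_and_diagonal [DecidableEq ι] {𝕜 : Type*} [RCLike 𝕜]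
    {P Q : Matrix ι ι 𝕜} (hP : P.PosDef) (hQ : Q.IsHermitian) :
    ∃ (S : Matrix ι ι 𝕜) (d : ι → ℝ), IsUnit S ∧ Sᴴ * P * S = 1 ∧
      Sᴴ * Q * S = diagonal (RCLike.ofReal ∘ d) := by
  obtain ⟨C, hC, rfl⟩ :=
    CStarAlgebra.isStrictlyPositive_iff_eq_star_mul_self.mp hP.isStrictlyPositive
  lift C to (Matrix ι ι 𝕜)ˣ using hC
  set R : Matrix ι ι 𝕜 := ↑C⁻¹
  have hCR : (C : Matrix ι ι 𝕜) * R = 1 := C.mul_inv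
  have hRQ : (Rᴴ * Q * R).IsHermitian := isHermitian_conjTranspose_mul_mul R hQ
  set O : Matrix ι ι 𝕜 := ↑hRQ.eigenvectorUnitary
  have hO : Oᴴ * O = 1 := Unitary.coe_star_mul_self hRQ.eigenvectorUnitary
  have hR_unit : IsUnit R := C⁻¹.isUnit
  have hO_unit : IsUnit O := (Unitary.toUnits hRQ.eigenvectorUnitary).isUnit
  refine ⟨R * O, hRQ.eigenvalues, hR_unit.mul hO_unit, ?_, ?_⟩
  · calc (R * O)ᴴ * (star (C : Matrix ι ι 𝕜) * C) * (R * O)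
        = Oᴴ * (((C : Matrix ι ι 𝕜) * R)ᴴ * ((C : Matrix ι ι 𝕜) * R)) * O := by
          simp only [conjTranspose_mul, star_eq_conjTranspose, Matrix.mul_assoc]
      _ = 1 := by rw [hCR, conjTranspose_one, Matrix.one_mul, Matrix.mul_one, hO]
  · calc (R * O)ᴴ * Q * (R * O) = Oᴴ * (Rᴴ * Q * R) * O := by
          simp only [conjTranspose_mul, Matrix.mul_assoc]
      _ = diagonal (RCLike.ofReal ∘ hRQ.eigenvalues) := by
          simpa only [Unitary.conjStarAlgAut_star_apply, Unitary.coe_star, star_eq_conjTranspose]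
            using hRQ.conjStarAlgAut_star_eigenvectorUnitary

theorem congruence_map_ofReal_add_I_smul (S P Q : Matrix ι ι ℝ) :
    (S.map Complex.ofReal)ᵀ * (P.map Complex.ofReal + Complex.I • Q.map Complex.ofReal)
        * S.map Complex.ofReal =
      (Sᵀ * P * S).map Complex.ofReal + Complex.I • (Sᵀ * Q * S).map Complex.ofReal := by
  have map_mul (X Y : Matrix ι ι ℝ) :
      (X * Y).map Complex.ofReal = X.map Complex.ofReal * Y.map Complex.ofReal :=
    Matrix.map_mul (f := Complex.ofRealHom)
  simp only [map_mul, transpose_map, Matrix.mul_add, Matrix.add_mul, Matrix.mul_smul,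
    Matrix.smul_mul]

theorem exists_real_congruence_eq_diagonal [DecidableEq ι] {P Q : Matrix ι ι ℝ} (hP : P.PosDef)
    (hQ : Q.IsSymm) :
    ∃ (S : Matrix ι ι ℝ) (c : ι → ℂ), S.det ≠ 0 ∧ (∀ i, 0 < (c i).re) ∧
      (S.map Complex.ofReal)ᵀ * (P.map Complex.ofReal + Complex.I • Q.map Complex.ofReal)
        * S.map Complex.ofReal = diagonal c := by
  obtain ⟨S, d, hS, hSP, hSQ⟩ := exists_congruence_eq_one_and_diagonal hP
    (Q := Q) (isHermitian_iff_isSymm.mpr hQ)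
  rw [conjTranspose_eq_transpose_of_trivial] at hSP hSQ
  refine ⟨S, fun i => 1 + Complex.I * d i, ((isUnit_iff_isUnit_det S).mp hS).ne_zero, by simp, ?_⟩
  rw [congruence_map_ofReal_add_I_smul, hSP, hSQ]
  ext i j
  by_cases hij : i = j <;> simp [hij]

end Diagonalization

section ChangeOfVariables

variable {ι E : Type*} [Fintype ι] [DecidableEq ι] [NormedAddCommGroup E]

theorem measurableEmbedding_toLin' {S : Matrix ι ι ℝ} (hS : S.det ≠ 0) :
    MeasurableEmbedding (toLin' S) :=
  (LinearEquiv.ofIsUnitDet (f := toLin' S) (v := Pi.basisFun ℝ ι) (v' := Pi.basisFun ℝ ι)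
    (by simpa using hS)).toContinuousLinearEquiv.toHomeomorph.measurableEmbedding

theorem integrable_comp_mulVec_iff {S : Matrix ι ι ℝ} (hS : S.det ≠ 0) {f : (ι → ℝ) → E} :
    Integrable (fun t => f (S *ᵥ t)) ↔ Integrable f := by
  have hc : ENNReal.ofReal |S.det⁻¹| ≠ 0 := by simpa using hS
  rw [← integrable_smul_measure (f := f) hc ENNReal.ofReal_ne_top,
    ← Real.map_matrix_volume_pi_eq_smul_volume_pi hS,
    (measurableEmbedding_toLin' hS).integrable_map_iff]
  rfl

theorem integral_comp_mulVec [NormedSpace ℝ E] {S : Matrix ι ι ℝ} (hS : S.det ≠ 0)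
    (f : (ι → ℝ) → E) :
    ∫ t, f (S *ᵥ t) = |S.det⁻¹| • ∫ t, f t := by
  rw [← ENNReal.toReal_ofReal (abs_nonneg S.det⁻¹), ← integral_smul_measure,
    ← Real.map_matrix_volume_pi_eq_smul_volume_pi hS,
    (measurableEmbedding_toLin' hS).integral_map]
  rfl

end ChangeOfVariables

section ComplexGaussian

variable {ι : Type*} [Fintype ι]

/-- The Gaussian `exp (-π tᵀMt)` on `ℝ^ι` attached to a complex matrix `M`. With the factor `π`, the
square of its integral is `(det M)⁻¹`. -/
noncomputable def complexGaussian (M : Matrix ι ι ℂ) (t : ι → ℝ) : ℂ :=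
  Complex.exp (-π * ((Complex.ofReal ∘ t) ⬝ᵥ M *ᵥ (Complex.ofReal ∘ t)))

theorem complexGaussian_mulVec (M : Matrix ι ι ℂ) (S : Matrix ι ι ℝ) (t : ι → ℝ) :
    complexGaussian M (S *ᵥ t) =
      complexGaussian ((S.map Complex.ofReal)ᵀ * M * S.map Complex.ofReal) t := by
  have hSt : Complex.ofReal ∘ (S *ᵥ t) = S.map Complex.ofReal *ᵥ (Complex.ofReal ∘ t) :=
    funext fun i => RingHom.map_mulVec Complex.ofRealHom S t i
  simp only [complexGaussian, hSt, ← mulVec_mulVec, dotProduct_mulVec _ _ᵀ, vecMul_transpose]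

theorem complexGaussian_map_add_I_smul (P Q : Matrix ι ι ℝ) (t : ι → ℝ) :
    complexGaussian (P.map Complex.ofReal + Complex.I • Q.map Complex.ofReal) t =
      Complex.exp (-π * ((t ⬝ᵥ P *ᵥ t : ℝ) + Complex.I * (t ⬝ᵥ Q *ᵥ t : ℝ))) := by
  have hquad (X : Matrix ι ι ℝ) :
      (Complex.ofReal ∘ t) ⬝ᵥ X.map Complex.ofReal *ᵥ (Complex.ofReal ∘ t) =
        ((t ⬝ᵥ X *ᵥ t : ℝ) : ℂ) := by
    simp [dotProduct, mulVec]
  rw [complexGaussian, add_mulVec, smul_mulVec, dotProduct_add, dotProduct_smul, hquad, hquad,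
    smul_eq_mul]

theorem complexGaussian_diagonal [DecidableEq ι] (c : ι → ℂ) (t : ι → ℝ) :
    complexGaussian (diagonal c) t =
      Complex.exp (-∑ i, π * c i * (t i : ℂ) ^ 2 + ∑ i, (0 : ι → ℂ) i * t i) := by
  simp only [complexGaussian, dotProduct, mulVec_diagonal, Function.comp_apply, Pi.zero_apply,
    zero_mul, Finset.sum_const_zero, add_zero, Finset.mul_sum, ← Finset.sum_neg_distrib]
  congr! 2 with i
  ring

theorem integrable_complexGaussian_diagonal [DecidableEq ι] {c : ι → ℂ}
    (hc : ∀ i, 0 < (c i).re) :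
    Integrable (complexGaussian (diagonal c)) := by
  rw [funext (complexGaussian_diagonal c)]
  refine GaussianFourier.integrable_cexp_neg_sum_mul_add (fun i => ?_) 0
  simpa [Real.pi_pos] using hc i

theorem sq_integral_complexGaussian_diagonal_mul_prod [DecidableEq ι] {c : ι → ℂ}
    (hc : ∀ i, 0 < (c i).re) :
    (∫ t, complexGaussian (diagonal c) t) ^ 2 * ∏ i, c i = 1 := by
  have hb (i : ι) : 0 < ((π : ℂ) * c i).re := by simpa [Real.pi_pos] using hc i
  simp_rw [complexGaussian_diagonal]
  rw [GaussianFourier.integral_cexp_neg_sum_mul_add hb 0, ← Finset.prod_pow,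
    ← Finset.prod_mul_distrib]
  refine Finset.prod_eq_one fun i _ => ?_
  have hci : c i ≠ 0 := fun h => by simpa [h] using hc i
  have hπ : (π : ℂ) ≠ 0 := Complex.ofReal_ne_zero.mpr Real.pi_ne_zero
  have hsqrt : (((π : ℂ) / (π * c i)) ^ (1 / 2 : ℂ)) ^ 2 = (c i)⁻¹ := by
    rw [← Complex.cpow_nat_mul, Nat.cast_ofNat, mul_one_div_cancel two_ne_zero, Complex.cpow_one]
    field_simp
  rw [mul_pow, hsqrt]
  simp [hci]

variable {P Q : Matrix ι ι ℝ}

theorem integrable_complexGaussian (hP : P.PosDef) (hQ : Q.IsSymm) :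
    Integrable (complexGaussian (P.map Complex.ofReal + Complex.I • Q.map Complex.ofReal)) := by
  classical
  obtain ⟨S, c, hS, hc, hSM⟩ := exists_real_congruence_eq_diagonal hP hQ
  rw [← integrable_comp_mulVec_iff hS]
  simp_rw [complexGaussian_mulVec, hSM]
  exact integrable_complexGaussian_diagonal hc

/-- Squaring the integral avoids choosing a branch of `(det (P + iQ)) ^ (-1/2)`. -/
theorem sq_integral_complexGaussian_mul_det [DecidableEq ι] (hP : P.PosDef) (hQ : Q.IsSymm) :
    (∫ t, complexGaussian (P.map Complex.ofReal + Complex.I • Q.map Complex.ofReal) t) ^ 2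
      * (P.map Complex.ofReal + Complex.I • Q.map Complex.ofReal).det = 1 := by
  obtain ⟨S, c, hS, hc, hSM⟩ := exists_real_congruence_eq_diagonal hP hQ
  set M := P.map Complex.ofReal + Complex.I • Q.map Complex.ofReal
  have hS' : (S.det : ℂ) ≠ 0 := Complex.ofReal_ne_zero.mpr hS
  have hdet : (S.det : ℂ) ^ 2 * M.det = ∏ i, c i := by
    have hSdet : (S.map Complex.ofReal).det = S.det := (RingHom.map_det Complex.ofRealHom S).symm
    rw [← det_diagonal, ← hSM, det_mul, det_mul, det_transpose, hSdet]
    ring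
  have hint : ∫ t, complexGaussian (diagonal c) t = |S.det⁻¹| • ∫ t, complexGaussian M t := by
    simp_rw [← integral_comp_mulVec hS, complexGaussian_mulVec, hSM]
  have h := sq_integral_complexGaussian_diagonal_mul_prod hc
  rw [hint, ← hdet, Complex.real_smul, mul_pow, ← Complex.ofReal_pow, sq_abs] at h
  rw [← h]
  push_cast
  field_simp

end ComplexGaussian

section BergmanKernel

variable {ι κ : Type*} [Fintype ι] [Fintype κ]

/-- The model Bergman kernel `exp (-(π/2)‖Z - Z'‖² - π √-1 Ω(Z,Z'))` between the point `Z = (u, 0)`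
of the Lagrangian subspace of the `u`-directions and an arbitrary point `Z' = (a, b)`. -/
noncomputable def bergmanKernel (a b u : κ → ℝ) : ℂ :=
  Complex.exp (-(π / 2) * (((u - a) ⬝ᵥ (u - a) + b ⬝ᵥ b : ℝ) : ℂ)
    - π * Complex.I * ((u ⬝ᵥ b : ℝ) : ℂ))

theorem norm_bergmanKernel (a b u : κ → ℝ) :
    ‖bergmanKernel a b u‖ =
      Real.exp (-(π / 2) * ((u - a) ⬝ᵥ (u - a))) * Real.exp (-(π / 2) * (b ⬝ᵥ b)) := by
  rw [bergmanKernel, Complex.norm_exp, ← Real.exp_add]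
  congr 1
  rw [mul_right_comm, ← Complex.ofReal_mul, Complex.sub_re, Complex.re_ofReal_mul,
    Complex.I_re, mul_zero, sub_zero, ← Complex.ofReal_ofNat, ← Complex.ofReal_div,
    ← Complex.ofReal_neg, Complex.re_ofReal_mul, Complex.ofReal_re]
  ring

theorem bergmanKernel_add_left (a b u : κ → ℝ) :
    bergmanKernel a b (u + a) =
      Complex.exp (-(π / 2) * ∑ i, (u i : ℂ) ^ 2 + ∑ i, (-π * Complex.I * b i) * u i) *
        Complex.exp (-(π / 2) * ((b ⬝ᵥ b : ℝ) : ℂ) - π * Complex.I * ((a ⬝ᵥ b : ℝ) : ℂ)) := by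
  rw [bergmanKernel, ← Complex.exp_add]
  congr 1
  simp only [dotProduct, add_sub_cancel_right, Pi.add_apply, Complex.ofReal_sum,
    Complex.ofReal_add, Complex.ofReal_mul, Finset.mul_sum, ← Finset.sum_add_distrib,
    ← Finset.sum_sub_distrib]
  congr! 1 with i
  ring

theorem integral_bergmanKernel (a b : κ → ℝ) :
    ∫ u, bergmanKernel a b u = 2 ^ (Fintype.card κ / 2 : ℂ) *
      Complex.exp (-π * (((b ⬝ᵥ b : ℝ) : ℂ) + Complex.I * ((a ⬝ᵥ b : ℝ) : ℂ))) := by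
  have hre : 0 < ((π : ℂ) / 2).re := by simp [Real.pi_pos]
  have hπ : (π : ℂ) ≠ 0 := Complex.ofReal_ne_zero.mpr Real.pi_ne_zero
  rw [← integral_add_right_eq_self _ a]
  simp_rw [bergmanKernel_add_left]
  rw [integral_mul_const, GaussianFourier.integral_cexp_neg_mul_sum_add hre, mul_assoc,
    ← Complex.exp_add, div_div_cancel₀ hπ]
  have hsum : ∑ i, (-π * Complex.I * b i : ℂ) ^ 2 = -π ^ 2 * ((b ⬝ᵥ b : ℝ) : ℂ) := by
    simp [mul_pow, dotProduct, Finset.mul_sum, ← sq]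
  rw [hsum]
  congr 2
  field_simp
  ring

theorem transpose_mul_quadratic (X Y : Matrix κ ι ℝ) (t : ι → ℝ) :
    t ⬝ᵥ (Xᵀ * Y) *ᵥ t = (X *ᵥ t) ⬝ᵥ (Y *ᵥ t) := by
  rw [← mulVec_mulVec, dotProduct_mulVec, vecMul_transpose]

theorem posDef_transpose_mul_self {V : Matrix κ ι ℝ} (hV : Function.Injective V.mulVec) :
    (Vᵀ * V).PosDef := by
  simpa using PosDef.conjTranspose_mul_self V hV

theorem integral_bergmanKernel_mulVec (U V : Matrix κ ι ℝ) (t : ι → ℝ) :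
    ∫ u, bergmanKernel (U *ᵥ t) (V *ᵥ t) u = 2 ^ (Fintype.card κ / 2 : ℂ) * complexGaussian
      ((Vᵀ * V).map Complex.ofReal + Complex.I • (Uᵀ * V).map Complex.ofReal) t := by
  rw [integral_bergmanKernel, complexGaussian_map_add_I_smul, transpose_mul_quadratic,
    transpose_mul_quadratic]

theorem integrable_exp_neg_mulVec_dotProduct_self {V : Matrix κ ι ℝ}
    (hV : Function.Injective V.mulVec) :
    Integrable fun t : ι → ℝ => Real.exp (-(π / 2) * ((V *ᵥ t) ⬝ᵥ (V *ᵥ t))) := by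
  have hP : ((1 / 2 : ℝ) • (Vᵀ * V)).PosDef := (posDef_transpose_mul_self hV).smul one_half_pos
  refine (integrable_complexGaussian hP isSymm_zero).norm.congr (.of_forall fun t => ?_)
  dsimp only
  rw [complexGaussian_map_add_I_smul, zero_mulVec, dotProduct_zero, Complex.ofReal_zero, mul_zero,
    add_zero, smul_mulVec, dotProduct_smul, transpose_mul_quadratic, smul_eq_mul,
    ← Complex.ofReal_neg, ← Complex.ofReal_mul, Complex.norm_exp_ofReal]
  congr 1
  ring

theorem continuous_bergmanKernel_mulVec (U V : Matrix κ ι ℝ) :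
    Continuous fun p : (ι → ℝ) × (κ → ℝ) => bergmanKernel (U *ᵥ p.1) (V *ᵥ p.1) p.2 := by
  unfold bergmanKernel
  fun_prop

theorem integrable_bergmanKernel (a b : κ → ℝ) : Integrable (bergmanKernel a b) := by
  classical
  have hu : Integrable fun u : κ → ℝ => Real.exp (-(π / 2) * (u ⬝ᵥ u)) := by
    simpa using integrable_exp_neg_mulVec_dotProduct_self
      (V := (1 : Matrix κ κ ℝ)) (mulVec_injective_of_isUnit isUnit_one)
  have hmeas : AEStronglyMeasurable (bergmanKernel a b) := by
    unfold bergmanKernel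
    exact Continuous.aestronglyMeasurable (by fun_prop)
  refine (integrable_norm_iff hmeas).mp ?_
  simp_rw [norm_bergmanKernel]
  exact (hu.comp_sub_right a).mul_const _

theorem integrable_bergmanKernel_mulVec (U : Matrix κ ι ℝ) {V : Matrix κ ι ℝ}
    (hV : Function.Injective V.mulVec) :
    Integrable fun p : (ι → ℝ) × (κ → ℝ) => bergmanKernel (U *ᵥ p.1) (V *ᵥ p.1) p.2 := by
  have hcont := continuous_bergmanKernel_mulVec U V
  have hslice (t : ι → ℝ) : Integrable (bergmanKernel (U *ᵥ t) (V *ᵥ t)) :=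
    integrable_bergmanKernel (U *ᵥ t) (V *ᵥ t)
  have hnorm (t : ι → ℝ) : ∫ u, ‖bergmanKernel (U *ᵥ t) (V *ᵥ t) u‖ =
      (∫ u : κ → ℝ, Real.exp (-(π / 2) * (u ⬝ᵥ u))) *
        Real.exp (-(π / 2) * ((V *ᵥ t) ⬝ᵥ (V *ᵥ t))) := by
    simp_rw [norm_bergmanKernel]
    rw [integral_mul_const,
      integral_sub_right_eq_self (fun u : κ → ℝ => Real.exp (-(π / 2) * (u ⬝ᵥ u)))]
  refine (integrable_prod_iff hcont.aestronglyMeasurable).mpr ⟨.of_forall hslice, ?_⟩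
  simp_rw [hnorm]
  exact (integrable_exp_neg_mulVec_dotProduct_self hV).const_mul _

theorem sq_integral_bergmanKernel_mul_det [DecidableEq ι] {U V : Matrix κ ι ℝ}
    (hV : Function.Injective V.mulVec) (hUV : (Uᵀ * V).IsSymm) :
    (∫ t, ∫ u, bergmanKernel (U *ᵥ t) (V *ᵥ t) u) ^ 2
      * ((Vᵀ * V).map Complex.ofReal + Complex.I • (Uᵀ * V).map Complex.ofReal).det
      = 2 ^ Fintype.card κ := by
  simp_rw [integral_bergmanKernel_mulVec]
  rw [integral_const_mul, mul_pow, mul_assoc,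
    sq_integral_complexGaussian_mul_det (posDef_transpose_mul_self hV) hUV, mul_one,
    ← Complex.cpow_nat_mul, Nat.cast_ofNat, mul_div_cancel₀ _ two_ne_zero, Complex.cpow_natCast]

end BergmanKernel

theorem transpose_submatrix_mul_submatrix {κ κ' ι ι' R : Type*} [Fintype κ] [Fintype κ']
    [NonUnitalNonAssocSemiring R] (X : Matrix κ ι R) {Y : Matrix κ ι' R} {e : κ' → κ}
    (he : Function.Injective e) (hY : ∀ i ∉ Set.range e, Y i = 0) :
    (X.submatrix e id)ᵀ * Y.submatrix e id = Xᵀ * Y := by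
  ext j k
  simp only [mul_apply, transpose_apply, submatrix_apply, id]
  exact Fintype.sum_of_injective e he _ _ (fun i hi => by simp [hY i hi]) fun _ => rfl

section Frame

variable {n m : ℕ}

/-- The matrix `U` whose columns are the `u`-components of the vectors `ν j`. -/
def uMat (ν : Fin m → RR2 n) : Matrix (Fin n) (Fin m) ℝ := Matrix.of fun i j => (ν j).1 i

/-- The matrix `V` whose columns are the `v`-components of the vectors `ν j`. -/
def vMat (ν : Fin m → RR2 n) : Matrix (Fin n) (Fin m) ℝ := Matrix.of fun i j => (ν j).2 i

theorem stdInner_eVec_left (i : Fin n) (Z : RR2 n) : stdInner (eVec i) Z = Z.1 i := by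
  simp [stdInner, eVec, Pi.single_apply]

theorem stdInner_fVec_right (Z : RR2 n) (i : Fin n) : stdInner Z (fVec i) = Z.2 i := by
  simp [stdInner, fVec, Pi.single_apply]

theorem stdSymp_eVec_left (i : Fin n) (Z : RR2 n) : stdSymp (eVec i) Z = Z.2 i := by
  simp [stdSymp, eVec, Pi.single_apply]

theorem sum_smul_eVec (u : Fin n → ℝ) : ∑ i, u i • eVec i = ((u, 0) : RR2 n) := by
  ext k <;> simp [eVec, Prod.fst_sum, Prod.snd_sum, Pi.single_apply]

theorem sum_smul_eq_mulVec (ν : Fin m → RR2 n) (t : Fin m → ℝ) :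
    ∑ j, t j • ν j = (uMat ν *ᵥ t, vMat ν *ᵥ t) := by
  ext k <;> simp [uMat, vMat, mulVec, dotProduct, Prod.fst_sum, Prod.snd_sum, mul_comm]

theorem modelKernel_eq_bergmanKernel (ν : Fin m → RR2 n) (t : Fin m → ℝ) (u : Fin n → ℝ) :
    modelKernel ν t u = bergmanKernel (uMat ν *ᵥ t) (vMat ν *ᵥ t) u := by
  rw [modelKernel, sum_smul_eVec, sum_smul_eq_mulVec]
  simp [bergmanKernel, stdInner, stdSymp, dotProduct]

theorem ker_snd_eq_span_eVec :
    LinearMap.ker (LinearMap.snd ℝ (Fin n → ℝ) (Fin n → ℝ)) =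
      Submodule.span ℝ (Set.range (eVec (n := n))) := by
  ext ⟨u, v⟩
  rw [LinearMap.mem_ker, LinearMap.snd_apply, Submodule.mem_span_range_iff_exists_fun]
  simp [sum_smul_eVec, eq_comm]

theorem linearIndependent_of_stdInner_eq_ite {ν : Fin m → RR2 n}
    (hortho : ∀ j k, stdInner (ν j) (ν k) = if j = k then 1 else 0) : LinearIndependent ℝ ν := by
  refine Fintype.linearIndependent_iff.mpr fun t ht k => ?_
  calc t k = ∑ j, t j * stdInner (ν j) (ν k) := by simp [hortho]
    _ = stdInner (∑ j, t j • ν j) (ν k) := by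
      simp only [stdInner, Prod.fst_sum, Prod.snd_sum, Finset.sum_apply, Prod.smul_fst,
        Prod.smul_snd, Pi.smul_apply, smul_eq_mul, Finset.sum_mul, mul_add, Finset.mul_sum,
        Finset.sum_add_distrib, mul_assoc]
      congr 1 <;> exact Finset.sum_comm
    _ = 0 := by simp [ht, stdInner]

theorem mulVec_vMat_injective {ν : Fin m → RR2 n} (hν : LinearIndependent ℝ ν)
    (hspan : Submodule.span ℝ (Set.range ν) ⊓
      Submodule.span ℝ (Set.range (eVec (n := n))) = ⊥) :
    Function.Injective (vMat ν).mulVec := by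
  rw [← ker_snd_eq_span_eVec, ← disjoint_iff] at hspan
  exact mulVec_injective_iff.mpr (hν.map hspan)

theorem isSymm_transpose_uMat_mul_vMat {ν : Fin m → RR2 n}
    (hiso : ∀ j k, stdSymp (ν j) (ν k) = 0) : ((uMat ν)ᵀ * vMat ν).IsSymm := by
  refine IsSymm.ext fun j k => ?_
  have hjk := hiso k j
  rw [stdSymp, Finset.sum_sub_distrib, sub_eq_zero] at hjk
  simpa [uMat, vMat, mul_apply, mul_comm] using hjk

end Frame

theorem stmt_7_general {k n m : ℕ} (hk : k ≤ n) {ν : Fin m → RR2 n}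
    (hν : LinearIndependent ℝ ν) (hiso : ∀ i j, stdSymp (ν i) (ν j) = 0)
    (hperp : ∀ j, ∀ i : Fin n, k ≤ (i : ℕ) → stdInner (ν j) (fVec i) = 0)
    (hspan : Submodule.span ℝ (Set.range ν) ⊓
        Submodule.span ℝ (Set.range (eVec (n := n))) = ⊥)
    {A B : Matrix (Fin k) (Fin m) ℝ}
    (hA : ∀ i j, A i j = stdSymp (eVec (Fin.castLE hk i)) (ν j))
    (hB : ∀ i j, B i j = stdInner (eVec (Fin.castLE hk i)) (ν j)) :
    Integrable (fun p : (Fin m → ℝ) × (Fin n → ℝ) => modelKernel ν p.1 p.2)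
    ∧ (∫ t : Fin m → ℝ, ∫ u : Fin n → ℝ, modelKernel ν t u) ^ 2
        * ((Aᵀ * A).map Complex.ofReal + Complex.I • (Bᵀ * A).map Complex.ofReal).det
      = 2 ^ n := by
  have hV := mulVec_vMat_injective hν hspan
  obtain rfl : A = (vMat ν).submatrix (Fin.castLE hk) id :=
    Matrix.ext fun i j => (hA i j).trans (stdSymp_eVec_left _ _)
  obtain rfl : B = (uMat ν).submatrix (Fin.castLE hk) id :=
    Matrix.ext fun i j => (hB i j).trans (stdInner_eVec_left _ _)
  have hrows (i : Fin n) (hi : i ∉ Set.range (Fin.castLE hk)) : vMat ν i = 0 := funext fun j =>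
    (stdInner_fVec_right _ _).symm.trans (hperp j i (by simpa using hi))
  simp_rw [modelKernel_eq_bergmanKernel,
    transpose_submatrix_mul_submatrix _ (Fin.castLE_injective hk) hrows]
  refine ⟨integrable_bergmanKernel_mulVec _ hV, ?_⟩
  simpa using sq_integral_bergmanKernel_mul_det hV (isSymm_transpose_uMat_mul_vMat hiso)

/-- Clean-intersection version of the model Gaussian integral: `ν₁, …, ν_m` orthonormal,
`Ω`-isotropic, orthogonal to `e_i` and `f_i` for `i > n - l`, and spanning a subspace meeting
`span{e₁,…,e_n}` only at `0`. Then the double integral `J` converges absolutely and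
`J² · det(AᵀA + √-1 BᵀA) = 2ⁿ`, where `A, B` are the `(n-l) × m` matrices
`A_{ij} = Ω(e_i, ν_j)`, `B_{ij} = ⟨e_i, ν_j⟩` for `1 ≤ i ≤ n - l`. -/
theorem stmt_7 (n l m : ℕ) (hl : l ≤ n) (hm : 1 ≤ m) (ν : Fin m → RR2 n)
    (hortho : ∀ j k, stdInner (ν j) (ν k) = if j = k then 1 else 0)
    (hiso : ∀ j k, stdSymp (ν j) (ν k) = 0)
    (hperp : ∀ j, ∀ i : Fin n, n - l ≤ (i : ℕ) →
      stdInner (ν j) (eVec i) = 0 ∧ stdInner (ν j) (fVec i) = 0)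
    (hspan : Submodule.span ℝ (Set.range ν) ⊓
        Submodule.span ℝ (Set.range (eVec (n := n))) = ⊥)
    (A B : Matrix (Fin (n - l)) (Fin m) ℝ)
    (hA : ∀ i j, A i j = stdSymp (eVec (Fin.castLE (Nat.sub_le n l) i)) (ν j))
    (hB : ∀ i j, B i j = stdInner (eVec (Fin.castLE (Nat.sub_le n l) i)) (ν j)) :
    Integrable (fun p : (Fin m → ℝ) × (Fin n → ℝ) => modelKernel ν p.1 p.2)
    ∧ (∫ t : Fin m → ℝ, ∫ u : Fin n → ℝ, modelKernel ν t u) ^ 2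
        * ((A.transpose * A).map Complex.ofReal
            + Complex.I • (B.transpose * A).map Complex.ofReal).det
      = 2 ^ n :=
  stmt_7_general (Nat.sub_le n l) (linearIndependent_of_stdInner_eq_ite hortho) hiso
    (fun j i hi => (hperp j i hi).2) hspan hA hB
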